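/- Let H_1, ..., H_r be finitely generated free abelian groups, M_i a finitely generated Z[H_i]-module, and H the direct sum of the H_i, with Z[H_i] viewed as a subring of Z[H]. Then for each i, the order of the Z[H]-torsion submodule of M_i ⊗_{Z[H_i]} Z[H] equals the order of the Z[H_i]-torsion submodule of M_i (viewed in Z[H]). -/

import Mathlib

/-!
STATEMENT 1: Let `H₁, …, H_r` be finitely generated free abelian groups, `M i` a
finitely generated `ℤ[H i]`-module, and `H` the direct sum of the `H i`, with
`ℤ[H i]` viewed as a subring of `ℤ[H]`.  Then for each `i`, the order of the
`ℤ[H]`-torsion submodule of `M i ⊗_{ℤ[H i]} ℤ[H]` equals the order of the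
`ℤ[H i]`-torsion submodule of `M i` (viewed in `ℤ[H]`).

Here `H i = ℤ^{m i}` for a finite index type `ι`, `H = ∏ i, H i`, and the order
`ord_{R}(N)` of a finitely generated `R`-module `N` (the gcd of the maximal
minors of a presentation matrix, well-defined up to units) is rendered by the
predicate `IsOrderOf R N d`.
-/

open TensorProduct

/-- `d` is the zeroth order of the finitely generated module `M` over the
commutative ring `R`: for some finite presentation `R^r --α--> R^s → M → 0`
(with `s ≤ r`), `d` is a gcd of the `s × s` minors of `α`. -/
def IsOrderOf (R : Type*) [CommRing R] (M : Type*) [AddCommGroup M] [Module R M]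
    (d : R) : Prop :=
  ∃ (s r : ℕ) (_ : s ≤ r) (α : Matrix (Fin s) (Fin r) R)
    (p : (Fin s → R) →ₗ[R] M),
      Function.Surjective p ∧
      LinearMap.ker p = LinearMap.range α.mulVecLin ∧
      (∀ c : Fin s → Fin r, d ∣ (α.submatrix id c).det) ∧
      (∀ e : R, (∀ c : Fin s → Fin r, e ∣ (α.submatrix id c).det) → e ∣ d)

section Helpers

open AddMonoidAlgebra in
/-- A divisor of a nonzero constant in a group ring `R[K]` is a monomial. -/
theorem dvd_const_monomial {R K : Type*} [CommRing R] [IsDomain R] [AddCommGroup K]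
    [TwoUniqueSums K] (a : R) (ha : a ≠ 0) (e : AddMonoidAlgebra R K)
    (h : e ∣ AddMonoidAlgebra.single 0 a) :
    ∃ k r, e = AddMonoidAlgebra.single k r := by
  obtain ⟨g, hg⟩ := h
  have hne : e * g ≠ 0 := by
    rw [← hg]
    intro h0
    apply ha
    have := congrArg (fun x => AddMonoidAlgebra.coeff x 0) h0
    simpa using this
  have he : e ≠ 0 := left_ne_zero_of_mul hne
  have hg0 : g ≠ 0 := right_ne_zero_of_mul hne
  have hcoe : ∀ k, k ≠ 0 → (e * g).coeff k = 0 := by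
    intro k hk
    rw [← hg]
    simp [Ne.symm hk]
  have hecard : 0 < e.coeff.support.card := by
    rw [Finset.card_pos, Finsupp.support_nonempty_iff]
    simpa using he
  have hgcard : 0 < g.coeff.support.card := by
    rw [Finset.card_pos, Finsupp.support_nonempty_iff]
    simpa using hg0
  have key : ¬ 1 < e.coeff.support.card * g.coeff.support.card := by
    intro hlt
    obtain ⟨p, hp, q, hq, hpq, hup, huq⟩ := TwoUniqueSums.uniqueAdd_of_one_lt_card hlt
    rw [Finset.mem_product] at hp hq
    have hz : ∀ p : K × K, p.1 ∈ e.coeff.support → p.2 ∈ g.coeff.support →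
        UniqueAdd e.coeff.support g.coeff.support p.1 p.2 → p.1 + p.2 = 0 := by
      intro p h1 h2 hu
      by_contra hc
      have h3 := AddMonoidAlgebra.coeff_mul_add_of_uniqueAdd hu
      rw [hcoe _ hc] at h3
      rw [Finsupp.mem_support_iff] at h1 h2
      exact mul_ne_zero h1 h2 h3.symm
    have h1 := hz p hp.1 hp.2 hup
    have h2 := hz q hq.1 hq.2 huq
    have h3 := hup hq.1 hq.2 (h2.trans h1.symm)
    exact hpq (Prod.ext h3.1.symm h3.2.symm)
  have hc1 : e.coeff.support.card ≤ 1 := by nlinarith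
  obtain ⟨k, r, hkr⟩ := (Finsupp.card_support_le_one' (f := e.coeff)).1 hc1
  refine ⟨k, r, ?_⟩
  ext x
  simp [hkr]

/-- gcds are preserved by passing to the group ring `R[K]`. -/
theorem gcd_groupRing {R K J : Type*} [CommRing R] [IsDomain R] [AddCommGroup K]
    [TwoUniqueSums K] (a : J → R) (d : R) (hd : ∀ e, (∀ j, e ∣ a j) → e ∣ d)
    (e : AddMonoidAlgebra R K) (he : ∀ j, e ∣ AddMonoidAlgebra.single 0 (a j)) :
    e ∣ AddMonoidAlgebra.single 0 d := by
  by_cases h0 : ∀ j, a j = 0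
  · have : (0 : R) ∣ d := hd 0 (fun j => by rw [h0 j])
    rw [zero_dvd_iff.1 this]
    simp
  · push Not at h0
    obtain ⟨j₀, hj₀⟩ := h0
    obtain ⟨k, r, rfl⟩ := dvd_const_monomial _ hj₀ e (he j₀)
    have hr : r ∣ d := by
      apply hd
      intro j
      obtain ⟨g, hg⟩ := he j
      have := congrArg (fun x => AddMonoidAlgebra.coeff x 0) hg
      refine ⟨g.coeff (-k), ?_⟩
      have h2 := AddMonoidAlgebra.coeff_single_mul_add g r k (-k)
      simp only [add_neg_cancel] at h2
      simp only [← h2, ← hg]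
      simp
    obtain ⟨c, rfl⟩ := hr
    refine ⟨AddMonoidAlgebra.single (-k) c, ?_⟩
    simp [AddMonoidAlgebra.single_mul_single]

theorem isOrderOf_congr {R M N : Type*} [CommRing R] [AddCommGroup M] [Module R M]
    [AddCommGroup N] [Module R N] (f : M ≃ₗ[R] N) {d : R} (h : IsOrderOf R M d) :
    IsOrderOf R N d := by
  obtain ⟨s, r, hsr, α, p, hp, hk, h1, h2⟩ := h
  refine ⟨s, r, hsr, α, f.toLinearMap ∘ₗ p, f.surjective.comp hp, ?_, h1, h2⟩
  rw [← hk]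
  exact LinearEquiv.ker_comp f p

theorem isOrderOf_baseChange {R S N : Type*} [CommRing R] [CommRing S] [Algebra R S]
    [AddCommGroup N] [Module R N] {d : R}
    (hgcd : ∀ (J : Type) (a : J → R) (d : R), (∀ e, (∀ j, e ∣ a j) → e ∣ d) →
      ∀ e : S, (∀ j, e ∣ algebraMap R S (a j)) → e ∣ algebraMap R S d)
    (h : IsOrderOf R N d) : IsOrderOf S (S ⊗[R] N) (algebraMap R S d) := by
  obtain ⟨s, r, hsr, α, p, hp, hk, h1, h2⟩ := h
  have hdet : ∀ c : Fin s → Fin r, ((α.map (algebraMap R S)).submatrix id c).det =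
      algebraMap R S (α.submatrix id c).det := by
    intro c
    rw [RingHom.map_det]
    rfl
  have hcomm : (α.map (algebraMap R S)).mulVecLin ∘ₗ
      (TensorProduct.piScalarRight R S S (Fin r)).toLinearMap =
      (TensorProduct.piScalarRight R S S (Fin s)).toLinearMap ∘ₗ
        α.mulVecLin.baseChange S := by
    ext j k
    simp [Matrix.mulVec, dotProduct, Pi.single_apply, Algebra.smul_def]
  have hex : Function.Exact (α.mulVecLin.baseChange S) (p.baseChange S) :=
    lTensor_exact S (LinearMap.exact_iff.2 hk) hp
  refine ⟨s, r, hsr, α.map (algebraMap R S),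
    p.baseChange S ∘ₗ (TensorProduct.piScalarRight R S S (Fin s)).symm.toLinearMap,
    ?_, ?_, ?_, ?_⟩
  · exact (LinearMap.lTensor_surjective S hp).comp (LinearEquiv.surjective _)
  · ext x
    obtain ⟨y, rfl⟩ := (TensorProduct.piScalarRight R S S (Fin s)).surjective x
    rw [LinearMap.mem_ker, LinearMap.comp_apply, LinearEquiv.coe_coe,
      LinearEquiv.symm_apply_apply, hex y]
    constructor
    · rintro ⟨z, rfl⟩
      exact ⟨_, LinearMap.congr_fun hcomm z⟩
    · rintro ⟨w, hw⟩
      obtain ⟨z, rfl⟩ := (TensorProduct.piScalarRight R S S (Fin r)).surjective w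
      refine ⟨z, (TensorProduct.piScalarRight R S S (Fin s)).injective ?_⟩
      rw [← hw]
      exact (LinearMap.congr_fun hcomm z).symm
  · intro c
    rw [hdet]
    exact map_dvd _ (h1 c)
  · intro e he
    refine hgcd _ (fun c : Fin s → Fin r => (α.submatrix id c).det) d h2 e ?_
    intro c
    rw [← hdet]
    exact he c

/-- A torsion-free module stays torsion-free after flat base change. -/
theorem torsion_baseChange_eq_bot {R S N : Type*} [CommRing R] [IsDomain R] [CommRing S]
    [Algebra R S] [Module.Flat R S] [AddCommGroup N] [Module R N] [Module.IsTorsionFree R N] :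
    Submodule.torsion S (S ⊗[R] N) = ⊥ := by
  let F := LocalizedModule (nonZeroDivisors R) N
  let _ : Module (FractionRing R) F :=
    inferInstanceAs (Module (Localization (nonZeroDivisors R)) F)
  have : IsScalarTower R (FractionRing R) F :=
    inferInstanceAs (IsScalarTower R (Localization (nonZeroDivisors R)) F)
  have : Module.Flat R (FractionRing R) := IsLocalization.flat _ (nonZeroDivisors R)
  have : Module.Flat R F := Module.Flat.trans R (FractionRing R) F
  let f : N →ₗ[R] F := LocalizedModule.mkLinearMap (nonZeroDivisors R) N
  have hf : Function.Injective f := by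
    rw [injective_iff_map_eq_zero]
    intro x hx
    obtain ⟨c, hc⟩ := (IsLocalizedModule.eq_zero_iff (nonZeroDivisors R) f).1 hx
    rw [Submonoid.smul_def] at hc
    exact (smul_eq_zero.1 hc).resolve_left (nonZeroDivisors.coe_ne_zero c)
  have hf' : Function.Injective (f.baseChange S) :=
    Module.Flat.lTensor_preserves_injective_linearMap f hf
  have hF : Submodule.torsion S (S ⊗[R] F) = ⊥ := Module.Flat.torsion_eq_bot
  rw [eq_bot_iff]
  intro x hx
  obtain ⟨c, hc⟩ := (Submodule.mem_torsion_iff x).1 hx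
  have : f.baseChange S x ∈ Submodule.torsion S (S ⊗[R] F) := by
    rw [Submodule.mem_torsion_iff]
    refine ⟨c, ?_⟩
    rw [Submonoid.smul_def] at hc ⊢
    rw [← map_smul, hc, map_zero]
  rw [hF, Submodule.mem_bot] at this
  rw [Submodule.mem_bot]
  exact hf' (this.trans (map_zero _).symm)

theorem range_torsion_baseChange {R S M : Type*} [CommRing R] [IsDomain R] [CommRing S]
    [IsDomain S] [Algebra R S] [Module.Flat R S] [FaithfulSMul R S]
    [AddCommGroup M] [Module R M] :
    LinearMap.range ((Submodule.torsion R M).subtype.baseChange S) =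
      Submodule.torsion S (S ⊗[R] M) := by
  apply le_antisymm
  · rintro _ ⟨x, rfl⟩
    induction x with
    | zero => simp
    | add x y hx hy => rw [map_add]; exact add_mem hx hy
    | tmul s t =>
      obtain ⟨t, ht⟩ := t
      rw [LinearMap.baseChange_tmul]
      obtain ⟨c, hc⟩ := (Submodule.mem_torsion_iff t).1 ht
      have hc0 : algebraMap R S c ∈ nonZeroDivisors S := by
        rw [mem_nonZeroDivisors_iff_ne_zero]
        intro h
        exact nonZeroDivisors.coe_ne_zero c
          (FaithfulSMul.algebraMap_injective R S (h.trans (map_zero _).symm))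
      rw [Submodule.mem_torsion_iff]
      refine ⟨⟨_, hc0⟩, ?_⟩
      rw [Submonoid.smul_def] at hc ⊢
      simp only [Submodule.subtype_apply, algebraMap_smul]
      rw [← TensorProduct.tmul_smul, hc, TensorProduct.tmul_zero]
  · intro x hx
    have hex : Function.Exact ((Submodule.torsion R M).subtype.baseChange S)
        ((Submodule.torsion R M).mkQ.baseChange S) :=
      lTensor_exact S (LinearMap.exact_subtype_mkQ _) (Submodule.mkQ_surjective _)
    rw [LinearMap.mem_range]
    refine (hex x).1 ?_
    have : (Submodule.torsion R M).mkQ.baseChange S x ∈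
        Submodule.torsion S (S ⊗[R] (M ⧸ Submodule.torsion R M)) := by
      obtain ⟨c, hc⟩ := (Submodule.mem_torsion_iff x).1 hx
      rw [Submodule.mem_torsion_iff]
      refine ⟨c, ?_⟩
      rw [Submonoid.smul_def] at hc ⊢
      rw [← map_smul, hc, map_zero]
    rwa [torsion_baseChange_eq_bot, Submodule.mem_bot] at this

theorem isOrderOf_torsion_baseChange {R S M K : Type*} [CommRing R] [IsDomain R] [CommRing S]
    [Algebra R S] [AddCommGroup K] [TwoUniqueSums K]
    [AddCommGroup M] [Module R M]
    (φ : S ≃+* AddMonoidAlgebra R K)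
    (hφ : ∀ r, φ (algebraMap R S r) = AddMonoidAlgebra.single 0 r) (d : R)
    (hd : IsOrderOf R (Submodule.torsion R M) d) :
    IsOrderOf S (Submodule.torsion S (S ⊗[R] M)) (algebraMap R S d) := by
  let ψ : S ≃ₐ[R] AddMonoidAlgebra R K := AlgEquiv.ofRingEquiv (f := φ) hφ
  have : IsDomain S := φ.toMulEquiv.isDomain _
  have : Module.Free R S := Module.Free.of_equiv ψ.symm.toLinearEquiv
  have : FaithfulSMul R S := by
    rw [faithfulSMul_iff_algebraMap_injective]
    intro x y hxy
    have := congrArg φ hxy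
    rw [hφ, hφ] at this
    have h2 := congrArg (fun z => AddMonoidAlgebra.coeff z 0) this
    simpa using h2
  have hinj : Function.Injective ((Submodule.torsion R M).subtype.baseChange S) :=
    Module.Flat.lTensor_preserves_injective_linearMap _ (Submodule.injective_subtype _)
  refine isOrderOf_congr ((LinearEquiv.ofInjective _ hinj).trans
    (LinearEquiv.ofEq _ _ range_torsion_baseChange)) (isOrderOf_baseChange ?_ hd)
  intro J a d hd e he
  rw [← map_dvd_iff φ, hφ]
  refine gcd_groupRing a d hd _ fun j => ?_
  rw [← hφ, map_dvd_iff φ]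
  exact he j

end Helpers

noncomputable section

variable {ι : Type} [Fintype ι] [DecidableEq ι] (m : ι → ℕ)

/-- `ℤ[H i]` where `H i = ℤ^{m i}`. -/
abbrev Ri (i : ι) : Type := AddMonoidAlgebra ℤ (Fin (m i) → ℤ)

/-- `ℤ[H]` where `H = ⊕ i, H i` is the direct sum (= finite product). -/
abbrev RH : Type := AddMonoidAlgebra ℤ (∀ i, Fin (m i) → ℤ)

/-- `ℤ[H i]` is a subring of `ℤ[H]` via the inclusion of the `i`-th summand. -/
instance (i : ι) : Algebra (Ri m i) (RH m) :=
  (AddMonoidAlgebra.mapDomainRingHom ℤ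
    (AddMonoidHom.single (fun i => Fin (m i) → ℤ) i)).toAlgebra

/-- Splitting off the `i`-th summand. -/
def splitAt (i : ι) : (∀ j, Fin (m j) → ℤ) ≃+
    (∀ j : {j // j ≠ i}, Fin (m j) → ℤ) × (Fin (m i) → ℤ) where
  toEquiv := (Equiv.piSplitAt i (fun j => Fin (m j) → ℤ)).trans (Equiv.prodComm _ _)
  map_add' _ _ := rfl

/-- `ℤ[H] ≅ ℤ[H i][K]`. -/
def splitRing (i : ι) : RH m ≃+*
    AddMonoidAlgebra (Ri m i) (∀ j : {j // j ≠ i}, Fin (m j) → ℤ) :=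
  (AddMonoidAlgebra.mapDomainRingEquiv ℤ (splitAt m i)).trans AddMonoidAlgebra.curryRingEquiv

theorem splitRing_algebraMap (i : ι) (r : Ri m i) :
    splitRing m i (algebraMap (Ri m i) (RH m) r) = AddMonoidAlgebra.single 0 r := by
  have hs : ∀ x : Fin (m i) → ℤ, splitAt m i (Pi.single i x) = (0, x) := by
    intro x
    refine Prod.ext ?_ ?_
    · funext j
      exact Pi.single_eq_of_ne (M := fun j => Fin (m j) → ℤ) j.2 x
    · exact Pi.single_eq_same (M := fun j => Fin (m j) → ℤ) i x
  have : (splitRing m i).toRingHom.comp (algebraMap (Ri m i) (RH m)) =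
      AddMonoidAlgebra.singleZeroRingHom := by
    apply AddMonoidAlgebra.ringHom_ext
    · intro z
      simp [splitRing, RingHom.algebraMap_toAlgebra]
      exact AddMonoidAlgebra.curryRingEquiv_single _ _ _
    · intro x
      simp [splitRing, RingHom.algebraMap_toAlgebra, hs]
  exact RingHom.congr_fun this r

theorem order_torsion_baseChange (i : ι)
    (M : Type*) [AddCommGroup M] [Module (Ri m i) M] [Module.Finite (Ri m i) M]
    (d : Ri m i)
    (hd : IsOrderOf (Ri m i) (Submodule.torsion (Ri m i) M) d) :
    IsOrderOf (RH m) (Submodule.torsion (RH m) ((RH m) ⊗[Ri m i] M))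
      (algebraMap (Ri m i) (RH m) d) := by
  exact isOrderOf_torsion_baseChange (splitRing m i) (splitRing_algebraMap m i) d hd

end
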